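/- Let k be a commutative ring with unity, N ≥ 2 an integer, and q ∈ k a primitive N-th root of unity. For all integers t, l with 1 ≤ t ≤ N−1 and 0 ≤ l ≤ N−t, one has (−1)^l · q^{lt + l(l−1)/2} · [N−t choose l] = [l+t−1 choose l] in k. In particular (taking t = 1), (−1)^l · q^{l(l+1)/2} · [N−1 choose l] = 1 for every 0 ≤ l ≤ N−1. -/

import Mathlib

/-- The `q`-integer `[m] = 1 + q + ⋯ + q^{m-1}`. -/
def qInt {k : Type*} [CommRing k] (q : k) (m : ℕ) : k := ∑ i ∈ Finset.range m, q ^ i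

/-- The `q`-factorial `[m]! = [m][m-1]⋯[1]`, with `[0]! = 1`. -/
def qFact {k : Type*} [CommRing k] (q : k) (m : ℕ) : k := ∏ i ∈ Finset.range m, qInt q (i + 1)

/-- `QBinomSpec q N m l c` says that `c` is *the* `q`-binomial coefficient `[m choose l]`
(for `0 ≤ l ≤ m ≤ N`): in the special cases `(l,m) = (0,N), (N,N)` it is `1` by convention,
and otherwise it is characterized by `[l]! ⬝ [m-l]! ⬝ c = [m]!`. -/
def QBinomSpec {k : Type*} [CommRing k] (q : k) (N m l : ℕ) (c : k) : Prop :=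
  ((m = N ∧ (l = 0 ∨ l = N)) → c = 1) ∧
  (¬(m = N ∧ (l = 0 ∨ l = N)) → qFact q l * qFact q (m - l) * c = qFact q m)

/-!
Splitting the sum `[N] = [m] + q ^ m [N - m] = 0` gives `[m] = -q ^ m [N - m]`. Applied to each
factor of `[t][t + 1]⋯[t + l - 1] = [t + l - 1]! / [t - 1]!`, this reflects the product into
`[N - t][N - t - 1]⋯[N - t - l + 1] = [N - t]! / [N - t - l]!`, up to the sign `(-1) ^ l` and the
power of `q` with exponent `t + (t + 1) + ⋯ + (t + l - 1) = l t + l (l - 1) / 2`.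
-/

section

open Finset
open scoped nonZeroDivisors

variable {k : Type*} [CommRing k] {q : k}

theorem qInt_add (q : k) (m n : ℕ) : qInt q (m + n) = qInt q m + q ^ m * qInt q n := by
  simp only [qInt, sum_range_add, pow_add, mul_sum]

theorem qInt_eq_neg_pow_mul_of_qInt_add_eq_zero {m n : ℕ} (h : qInt q (m + n) = 0) :
    qInt q m = -q ^ m * qInt q n := by
  rw [qInt_add] at h
  linear_combination h

theorem qInt_mul_sub_one (q : k) (m : ℕ) : qInt q m * (q - 1) = q ^ m - 1 :=
  geom_sum_mul q m

theorem qInt_eq_zero_of_pow_eq_one {n : ℕ} (hq : q - 1 ∈ k⁰) (h : q ^ n = 1) :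
    qInt q n = 0 := by
  rw [← mul_right_mem_nonZeroDivisors_eq_zero_iff hq, qInt_mul_sub_one, h, sub_self]

theorem qInt_mem_nonZeroDivisors {m : ℕ} (h : q ^ m - 1 ∈ k⁰) : qInt q m ∈ k⁰ := by
  rw [← qInt_mul_sub_one] at h
  exact (mul_mem_nonZeroDivisors.1 h).1

theorem qFact_zero (q : k) : qFact q 0 = 1 :=
  prod_range_zero _

theorem qFact_add (q : k) (m n : ℕ) :
    qFact q (m + n) = qFact q m * ∏ i ∈ range n, qInt q (m + i + 1) :=
  prod_range_add _ m n

theorem qFact_mem_nonZeroDivisors {m n : ℕ} (h : ∀ i, 0 < i → i < n → qInt q i ∈ k⁰)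
    (hm : m < n) : qFact q m ∈ k⁰ :=
  Submonoid.prod_mem _ fun i hi => h (i + 1) i.succ_pos (by have := mem_range.1 hi; omega)

theorem sum_range_const_add (t l : ℕ) : ∑ i ∈ range l, (t + i) = l * t + l * (l - 1) / 2 := by
  rw [sum_add_distrib, sum_const, card_range, smul_eq_mul, sum_range_id]

theorem prod_qInt_eq_of_qInt_eq_zero {r l t : ℕ} (h : qInt q (r + l + t) = 0) :
    ∏ i ∈ range l, qInt q (t + i) =
      (-1) ^ l * q ^ (l * t + l * (l - 1) / 2) * ∏ i ∈ range l, qInt q (r + i + 1) := by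
  have reflect_factor : ∀ i ∈ range l,
      qInt q (t + i) = -1 * q ^ (t + i) * qInt q (r + (l - 1 - i) + 1) := by
    intro i hi
    have hi := mem_range.1 hi
    rw [neg_one_mul]
    apply qInt_eq_neg_pow_mul_of_qInt_add_eq_zero
    rwa [show t + i + (r + (l - 1 - i) + 1) = r + l + t by omega]
  rw [prod_congr rfl reflect_factor, prod_mul_distrib, prod_mul_distrib, prod_const, card_range,
    prod_pow_eq_pow_sum, sum_range_const_add, prod_range_reflect (fun i => qInt q (r + i + 1))]

theorem qFact_mul_qFact_of_qInt_eq_zero {r l s : ℕ} (h : qInt q (r + l + (s + 1)) = 0) :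
    (-1) ^ l * q ^ (l * (s + 1) + l * (l - 1) / 2) * (qFact q s * qFact q (r + l)) =
      qFact q r * qFact q (s + l) := by
  have reflection := prod_qInt_eq_of_qInt_eq_zero h
  simp only [add_right_comm s 1] at reflection
  rw [qFact_add q r, qFact_add q s, reflection]
  ring

namespace QBinomSpec

theorem qFact_mul_eq {N a l : ℕ} {c : k} (hc : QBinomSpec q N (a + l) l c) (h : a + l < N) :
    qFact q l * qFact q a * c = qFact q (a + l) := by
  simpa only [Nat.add_sub_cancel] using hc.2 fun hN => h.ne hN.1

theorem eq_one_of_self {N l : ℕ} {c : k} (hc : QBinomSpec q N l l c) (h : l < N)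
    (hl : qFact q l ∈ k⁰) : c = 1 := by
  rw [← mul_cancel_left_mem_nonZeroDivisors hl, mul_one]
  simpa only [Nat.sub_self, qFact_zero, mul_one] using hc.2 fun hN => h.ne hN.1

theorem eq_of_qInt_eq_zero {r l s : ℕ} {c₁ c₂ : k} (h : qInt q (r + l + (s + 1)) = 0)
    (hreg : ∀ m, 0 < m → m < r + l + (s + 1) → qInt q m ∈ k⁰)
    (hc₁ : QBinomSpec q (r + l + (s + 1)) (r + l) l c₁)
    (hc₂ : QBinomSpec q (r + l + (s + 1)) (s + l) l c₂) :
    (-1) ^ l * q ^ (l * (s + 1) + l * (l - 1) / 2) * c₁ = c₂ := by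
  have hl : qFact q l ∈ k⁰ := qFact_mem_nonZeroDivisors hreg (by omega)
  have hr : qFact q r ∈ k⁰ := qFact_mem_nonZeroDivisors hreg (by omega)
  have hs : qFact q s ∈ k⁰ := qFact_mem_nonZeroDivisors hreg (by omega)
  rw [← mul_cancel_left_mem_nonZeroDivisors (mul_mem (mul_mem hl hr) hs)]
  have reflection := qFact_mul_qFact_of_qInt_eq_zero h
  rw [← hc₁.qFact_mul_eq (by omega)] at reflection
  calc qFact q l * qFact q r * qFact q s *
          ((-1) ^ l * q ^ (l * (s + 1) + l * (l - 1) / 2) * c₁)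
      = qFact q r * qFact q (s + l) := by linear_combination reflection
    _ = qFact q l * qFact q r * qFact q s * c₂ := by
      rw [← hc₂.qFact_mul_eq (by omega)]
      ring

end QBinomSpec

/-- Besides primitive `N`-th roots of unity, this covers `q = 1` over a field of prime
characteristic `N`, where `[m]` is the residue of `m`. -/
theorem q_binom_inversion_general {N t l : ℕ} {c₁ c₂ : k} (hN : qInt q N = 0)
    (hreg : ∀ m, 0 < m → m < N → qInt q m ∈ k⁰) (ht : 0 < t) (hlt : l + t ≤ N)
    (hc₁ : QBinomSpec q N (N - t) l c₁) (hc₂ : QBinomSpec q N (l + t - 1) l c₂) :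
    (-1) ^ l * q ^ (l * t + l * (l - 1) / 2) * c₁ = c₂ ∧
    (t = 1 → (-1) ^ l * q ^ (l * (l + 1) / 2) * c₁ = 1) := by
  obtain ⟨s, rfl⟩ : ∃ s, t = s + 1 := ⟨t - 1, by omega⟩
  obtain ⟨r, rfl⟩ : ∃ r, N = r + l + (s + 1) := ⟨N - (l + (s + 1)), by omega⟩
  rw [Nat.add_sub_cancel] at hc₁
  rw [show l + (s + 1) - 1 = s + l by omega] at hc₂
  have inversion := QBinomSpec.eq_of_qInt_eq_zero hN hreg hc₁ hc₂
  refine ⟨inversion, fun hs => ?_⟩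
  obtain rfl : s = 0 := Nat.succ.inj hs
  have exponent : l * (l + 1) / 2 = l * (0 + 1) + l * (l - 1) / 2 := by
    rw [zero_add, mul_one, add_comm l (_ / 2), ← Nat.triangle_succ, Nat.add_sub_cancel, mul_comm]
  rw [Nat.zero_add l] at hc₂
  rw [exponent, inversion]
  exact hc₂.eq_one_of_self (by omega) (qFact_mem_nonZeroDivisors hreg (by omega))

end

/-- for `1 ≤ t ≤ N−1` and `0 ≤ l ≤ N−t`,
`(−1)^l ⬝ q^{lt + l(l−1)/2} ⬝ [N−t choose l] = [l+t−1 choose l]`; in particular for `t = 1`,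
`(−1)^l ⬝ q^{l(l+1)/2} ⬝ [N−1 choose l] = 1` for `0 ≤ l ≤ N−1`. -/
theorem q_binom_inversion
    {k : Type*} [CommRing k] (N : ℕ) (hN : 2 ≤ N) (q : k)
    (hq1 : q ^ N = 1)
    (hq2 : ∀ l : ℕ, 1 ≤ l → l ≤ N - 1 → q ^ l - 1 ∈ nonZeroDivisors k)
    (t l : ℕ) (ht1 : 1 ≤ t) (htN : t ≤ N - 1) (hl : l ≤ N - t)
    (c₁ c₂ : k)
    (hc₁ : QBinomSpec q N (N - t) l c₁)
    (hc₂ : QBinomSpec q N (l + t - 1) l c₂) :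
    (-1 : k) ^ l * q ^ (l * t + l * (l - 1) / 2) * c₁ = c₂ ∧
    (t = 1 → (-1 : k) ^ l * q ^ (l * (l + 1) / 2) * c₁ = 1) := by
  have hq : q - 1 ∈ nonZeroDivisors k := by simpa only [pow_one] using hq2 1 le_rfl (by omega)
  exact q_binom_inversion_general (qInt_eq_zero_of_pow_eq_one hq hq1)
    (fun m hm hmN => qInt_mem_nonZeroDivisors (hq2 m hm (by omega))) ht1 (by omega) hc₁ hc₂
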